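/- Let R be a commutative ring, let {A_k, f_k} be an inverse system of cochain complexes of R-modules with limit A_∞ (with structure maps f̃_k : A_∞ → A_k), and let B be a cochain complex of R-modules that is bounded below, i.e. B^i = 0 for all i < m for some m ∈ ℤ. Then B ⊗ A_∞, together with the maps id_B ⊗ f̃_k : B ⊗ A_∞ → B ⊗ A_k, is a limit of the inverse system {B ⊗ A_k, id_B ⊗ f_k}; in particular lim (B ⊗ A_k) ≃ B ⊗ A_∞, i.e. the limiting process commutes with the tensor product. -/

import Mathlib

/-!
Tensoring with `B` is a DG functor: it acts on cochains of all degrees, compatibly with composition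
and with the differential `δ` of the Hom complex. The mapping cone of `φ` is characterised by
identities between cochains (`M` splits as the source plus the target of `φ` through cochains
whose first inclusion has differential `φ`), so `B ⊗ -` commutes with mapping cones; it also
preserves homotopy equivalences. If `B` vanishes below `m` and `C ≃ Cone(φ)` vanishes below `d`,
then `B ⊗ C ≃ Cone(B ⊗ φ)` vanishes below `m + d`. So tensoring shifts lower bounds on the
homological order by the constant `m`, and the orders still tend to infinity.
-/

open CategoryTheory CategoryTheory.Limits MonoidalCategory

/-- Cochain complexes of `R`-modules, with differential of degree `+1`. -/
abbrev Cx (R : Type) [Ring R] := CochainComplex (ModuleCat R) ℤ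

/-- `homOrderGE f d` says that the homological order `|f|_h` is at least `d`:
there is a complex `C`, chain homotopy equivalent to the mapping cone of `f`,
which vanishes in all degrees `< d`. -/
def homOrderGE {R : Type} [Ring R] {A B : Cx R} (f : A ⟶ B) (d : ℤ) : Prop :=
  ∃ C : Cx R, Nonempty (HomotopyEquiv (CochainComplex.mappingCone f) C) ∧
    ∀ i : ℤ, i < d → IsZero (C.X i)

/-- `(L, ft)` is a limit of the inverse system `{A_k, f_k}`:
the maps `ft k : L ⟶ A k` are compatible with the system maps and
`|ft k|_h → ∞` as `k → ∞`. -/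
def IsSystemLimit {R : Type} [Ring R] (A : ℕ → Cx R) (f : ∀ k : ℕ, A (k + 1) ⟶ A k)
    (L : Cx R) (ft : ∀ k : ℕ, L ⟶ A k) : Prop :=
  (∀ k : ℕ, ft (k + 1) ≫ f k = ft k) ∧
  (∀ d : ℤ, ∃ N : ℕ, ∀ k : ℕ, N ≤ k → homOrderGE (ft k) d)

section Monoidal

variable {R : Type} [CommRing R]

instance (X : ModuleCat R) : PreservesColimitsOfSize.{0, 0} ((curriedTensor (ModuleCat R)).obj X) :=
  inferInstanceAs (PreservesColimitsOfSize.{0, 0} (tensorLeft X))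

noncomputable instance (X : ModuleCat R) :
    PreservesColimitsOfSize.{0, 0} ((curriedTensor (ModuleCat R)).flip.obj X) :=
  preservesColimits_of_natIso
    (NatIso.ofComponents (fun Y => β_ X Y) (by intros; simp) :
      tensorLeft X ≅ (curriedTensor (ModuleCat R)).flip.obj X)

instance : (curriedTensor (ModuleCat R)).Additive where
  map_add := by
    intros
    ext Z
    simp [curriedTensor, MonoidalPreadditive.add_whiskerRight]

set_option synthInstance.maxHeartbeats 1000000
set_option maxHeartbeats 1000000

section CochainComplex

open CochainComplex HomComplex

variable {C : Type*} [Category* C] [Preadditive C] {K L M : CochainComplex C ℤ}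

/-- The isomorphism of complexes underlying a morphism `f` that has a two-sided inverse among
cochains of degree `0`; such an inverse automatically commutes with the differentials. -/
noncomputable def isoOfCochainInverse (f : K ⟶ L) (γ : Cochain L K 0)
    (hfγ : (Cochain.ofHom f).comp γ (zero_add 0) = Cochain.ofHom (𝟙 K))
    (hγf : γ.comp (Cochain.ofHom f) (zero_add 0) = Cochain.ofHom (𝟙 L)) : K ≅ L :=
  HomologicalComplex.Hom.isoOfComponents fun n =>
    { hom := f.f n
      inv := γ.v n n (add_zero n)
      hom_inv_id := by simpa using Cochain.congr_v hfγ n n (add_zero n)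
      inv_hom_id := by simpa using Cochain.congr_v hγf n n (add_zero n) }

/-- The recognition principle for mapping cones: `M` is isomorphic to the mapping cone of
`φ : K ⟶ L` as soon as it decomposes as a direct sum of `K` (shifted by `1`) and `L` through
cochains of the same degrees as `mappingCone.inl`, `inr`, `fst` and `snd`, and the differential of
the first inclusion is `φ`. -/
noncomputable def mappingConeIsoOfSplitting (φ : K ⟶ L) [HomologicalComplex.HasHomotopyCofiber φ]
    (inl : Cochain K M (-1)) (inr : L ⟶ M) (fst : Cochain M K 1) (snd : Cochain M L 0)
    (δ_inl : δ (-1) 0 inl = Cochain.ofHom (φ ≫ inr))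
    (inl_fst : inl.comp fst (neg_add_cancel 1) = Cochain.ofHom (𝟙 K))
    (inl_snd : inl.comp snd (add_zero (-1)) = 0)
    (inr_fst : (Cochain.ofHom inr).comp fst (zero_add 1) = 0)
    (inr_snd : (Cochain.ofHom inr).comp snd (zero_add 0) = Cochain.ofHom (𝟙 L))
    (decomp : fst.comp inl (add_neg_cancel 1) + snd.comp (Cochain.ofHom inr) (add_zero 0) =
      Cochain.ofHom (𝟙 M)) :
    mappingCone φ ≅ M :=
  isoOfCochainInverse (mappingCone.desc φ inl inr δ_inl)
    (mappingCone.liftCochain φ fst snd (zero_add 1))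
    (by
      have inl_lift : inl.comp (mappingCone.liftCochain φ fst snd (zero_add 1)) (add_zero (-1)) =
          mappingCone.inl φ := by
        rw [mappingCone.liftCochain, Cochain.comp_add, ← Cochain.comp_assoc _ _ _
          (neg_add_cancel 1) (add_neg_cancel 1) (by simp), inl_fst, Cochain.id_comp,
          ← Cochain.comp_assoc_of_third_is_zero_cochain, inl_snd, Cochain.zero_comp, add_zero]
      have inr_lift : (Cochain.ofHom inr).comp
          (mappingCone.liftCochain φ fst snd (zero_add 1)) (zero_add 0) =
          Cochain.ofHom (mappingCone.inr φ) := by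
        rw [mappingCone.liftCochain, Cochain.comp_add,
          ← Cochain.comp_assoc_of_first_is_zero_cochain, inr_fst, Cochain.zero_comp, zero_add,
          ← Cochain.comp_assoc_of_first_is_zero_cochain, inr_snd, Cochain.id_comp]
      rw [mappingCone.ofHom_desc, mappingCone.descCochain, Cochain.add_comp,
        Cochain.comp_assoc_of_third_is_zero_cochain, inl_lift,
        Cochain.comp_assoc_of_third_is_zero_cochain, inr_lift, mappingCone.id])
    (by rw [mappingCone.ofHom_desc, mappingCone.liftCochain_descCochain, decomp])

end CochainComplex

section MapBifunctor

open HomologicalComplex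

lemma isZero_obj_obj_of_left {C₁ C₂ D : Type*} [Category* C₁] [Category* C₂] [Category* D]
    [HasZeroMorphisms C₁] [HasZeroMorphisms D] (F : C₁ ⥤ C₂ ⥤ D) [F.PreservesZeroMorphisms]
    {X : C₁} (hX : IsZero X) (Y : C₂) : IsZero ((F.obj X).obj Y) := by
  rw [IsZero.iff_id_eq_zero, ← NatTrans.id_app, ← F.map_id, hX.eq_zero_of_src (𝟙 X), F.map_zero,
    zero_app]

variable {C₁ C₂ D I₁ I₂ J : Type*} [Category* C₁] [Category* C₂] [Category* D] [Preadditive D]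
  {c₁ : ComplexShape I₁} {c₂ : ComplexShape I₂}

section ZeroMorphisms

variable [HasZeroMorphisms C₁] [HasZeroMorphisms C₂]
  (F : C₁ ⥤ C₂ ⥤ D) [F.PreservesZeroMorphisms] [∀ X, (F.obj X).PreservesZeroMorphisms]
  (K : HomologicalComplex C₁ c₁) (L : HomologicalComplex C₂ c₂) (c : ComplexShape J)
  [DecidableEq J] [TotalComplexShape c₁ c₂ c] [HasMapBifunctor K L F c]

lemma mapBifunctorMap_id : mapBifunctorMap (𝟙 K) (𝟙 L) F c = 𝟙 _ := by
  ext
  simp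

lemma ι_mapBifunctor_d {i₁ j₁ : I₁} {i₂ j₂ : I₂} {p q : J} (h₁ : c₁.Rel i₁ j₁)
    (h₂ : c₂.Rel i₂ j₂) (h : ComplexShape.π c₁ c₂ c (i₁, i₂) = p)
    (h₁' : ComplexShape.π c₁ c₂ c (j₁, i₂) = q) (h₂' : ComplexShape.π c₁ c₂ c (i₁, j₂) = q) :
    ιMapBifunctor K L F c i₁ i₂ p h ≫ (mapBifunctor K L F c).d p q =
      ComplexShape.ε₁ c₁ c₂ c (i₁, i₂) •
          ((F.map (K.d i₁ j₁)).app (L.X i₂) ≫ ιMapBifunctor K L F c j₁ i₂ q h₁') +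
        ComplexShape.ε₂ c₁ c₂ c (i₁, i₂) •
          ((F.obj (K.X i₁)).map (L.d i₂ j₂) ≫ ιMapBifunctor K L F c i₁ j₂ q h₂') := by
  rw [mapBifunctor.d_eq, Preadditive.comp_add, mapBifunctor.ι_D₁, mapBifunctor.ι_D₂,
    mapBifunctor.d₁_eq _ _ _ _ h₁ _ _ h₁', mapBifunctor.d₂_eq _ _ _ _ _ h₂ _ h₂']

lemma ι_mapBifunctor_up_d (K : CochainComplex C₁ ℤ) (L : CochainComplex C₂ ℤ)
    [HasMapBifunctor K L F (ComplexShape.up ℤ)] {i₁ j₁ i₂ j₂ p q : ℤ} (h₁ : i₁ + 1 = j₁)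
    (h₂ : i₂ + 1 = j₂) (h : i₁ + i₂ = p) (h₁' : j₁ + i₂ = q) (h₂' : i₁ + j₂ = q) :
    ιMapBifunctor K L F (ComplexShape.up ℤ) i₁ i₂ p h ≫
        (mapBifunctor K L F (ComplexShape.up ℤ)).d p q =
      (F.map (K.d i₁ j₁)).app (L.X i₂) ≫ ιMapBifunctor K L F (ComplexShape.up ℤ) j₁ i₂ q h₁' +
        i₁.negOnePow • ((F.obj (K.X i₁)).map (L.d i₂ j₂) ≫
          ιMapBifunctor K L F (ComplexShape.up ℤ) i₁ j₂ q h₂') := by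
  rw [ι_mapBifunctor_d F K L _ h₁ h₂ h h₁' h₂']
  simp

variable {K L c} in
lemma isZero_mapBifunctor_X {j : J}
    (h : ∀ i₁ i₂, ComplexShape.π c₁ c₂ c (i₁, i₂) = j → IsZero ((F.obj (K.X i₁)).obj (L.X i₂))) :
    IsZero ((mapBifunctor K L F c).X j) := by
  rw [IsZero.iff_id_eq_zero]
  exact mapBifunctor.hom_ext fun i₁ i₂ hj => (h i₁ i₂ hj).eq_of_src _ _

lemma isZero_mapBifunctor_X_of_lt {K : CochainComplex C₁ ℤ} {L : CochainComplex C₂ ℤ}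
    [HasMapBifunctor K L F (ComplexShape.up ℤ)] {m d : ℤ} (hK : ∀ i < m, IsZero (K.X i))
    (hL : ∀ i < d, IsZero (L.X i)) {n : ℤ} (hn : n < m + d) :
    IsZero ((mapBifunctor K L F (ComplexShape.up ℤ)).X n) := by
  refine isZero_mapBifunctor_X F fun i₁ i₂ (h : i₁ + i₂ = n) => ?_
  obtain hi₁ | hi₂ : i₁ < m ∨ i₂ < d := by lia
  · exact isZero_obj_obj_of_left F (hK i₁ hi₁) _
  · exact (F.obj _).map_isZero (hL i₂ hi₂)

end ZeroMorphisms

/-- The homotopy equivalence between total complexes induced by a homotopy equivalence in the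
second variable of a bifunctor. -/
noncomputable def mapBifunctorHomotopyEquiv₂ [Preadditive C₁] [Preadditive C₂]
    (F : C₁ ⥤ C₂ ⥤ D) [F.Additive] [∀ X, (F.obj X).Additive]
    (B : HomologicalComplex C₁ c₁) {K L : HomologicalComplex C₂ c₂} (e : HomotopyEquiv K L)
    (c : ComplexShape J) [DecidableEq J] [TotalComplexShape c₁ c₂ c]
    [HasMapBifunctor B K F c] [HasMapBifunctor B L F c] :
    HomotopyEquiv (mapBifunctor B K F c) (mapBifunctor B L F c) where
  hom := mapBifunctorMap (𝟙 B) e.hom F c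
  inv := mapBifunctorMap (𝟙 B) e.inv F c
  homotopyHomInvId := (Homotopy.ofEq (by ext; simp)).trans
    ((mapBifunctorMapHomotopy₂ (𝟙 B) e.homotopyHomInvId F c).trans
      (Homotopy.ofEq (mapBifunctorMap_id F B K c)))
  homotopyInvHomId := (Homotopy.ofEq (by ext; simp)).trans
    ((mapBifunctorMapHomotopy₂ (𝟙 B) e.homotopyInvHomId F c).trans
      (Homotopy.ofEq (mapBifunctorMap_id F B L c)))

end MapBifunctor

section WhiskerLeftCochain

open CochainComplex HomComplex HomologicalComplex

variable {C₁ C₂ D : Type*} [Category* C₁] [Category* C₂] [Category* D]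
  [HasZeroMorphisms C₁] [Preadditive C₂] [Preadditive D]
  (F : C₁ ⥤ C₂ ⥤ D) [F.PreservesZeroMorphisms] [∀ X, (F.obj X).Additive]
  (B : CochainComplex C₁ ℤ) {K L M : CochainComplex C₂ ℤ}
  [HasMapBifunctor B K F (ComplexShape.up ℤ)] [HasMapBifunctor B L F (ComplexShape.up ℤ)]
  [HasMapBifunctor B M F (ComplexShape.up ℤ)]

/-- The tensor product `id_B ⊗ γ` of the identity of `B` with a cochain `γ` of degree `n`, where
the tensor product of complexes is the one given by the bifunctor `F`. By the Koszul sign rule,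
moving `γ` past an element of degree `i₁` produces the sign `(-1) ^ (n * i₁)`. -/
noncomputable def whiskerLeftCochain {n : ℤ} : Cochain K L n →+
    Cochain (mapBifunctor B K F (ComplexShape.up ℤ)) (mapBifunctor B L F (ComplexShape.up ℤ)) n :=
  AddMonoidHom.mk' (fun γ => Cochain.mk fun p q hpq => mapBifunctorDesc fun i₁ i₂ h =>
      (n * i₁).negOnePow • ((F.obj (B.X i₁)).map (γ.v i₂ (i₂ + n) rfl) ≫
        ιMapBifunctor B L F (ComplexShape.up ℤ) i₁ (i₂ + n) q (by dsimp at h ⊢; lia)))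
    fun γ γ' => by
      ext p q hpq : 1
      refine mapBifunctor.hom_ext fun i₁ i₂ h => ?_
      simp

lemma ι_whiskerLeftCochain {n : ℤ} (γ : Cochain K L n) {p q i₁ i₂ j₂ : ℤ} (hpq : p + n = q)
    (h : i₁ + i₂ = p) (hj : i₂ + n = j₂) (h' : i₁ + j₂ = q) :
    ιMapBifunctor B K F (ComplexShape.up ℤ) i₁ i₂ p h ≫ (whiskerLeftCochain F B γ).v p q hpq =
      (n * i₁).negOnePow • ((F.obj (B.X i₁)).map (γ.v i₂ j₂ hj) ≫
        ιMapBifunctor B L F (ComplexShape.up ℤ) i₁ j₂ q h') := by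
  subst hj
  simp [whiskerLeftCochain]

lemma whiskerLeftCochain_comp {n m k : ℤ} (γ : Cochain K L n) (γ' : Cochain L M m)
    (hk : n + m = k) :
    whiskerLeftCochain F B (γ.comp γ' hk) =
      (whiskerLeftCochain F B γ).comp (whiskerLeftCochain F B γ') hk := by
  ext p q hpq : 1
  refine mapBifunctor.hom_ext fun i₁ i₂ (h : i₁ + i₂ = p) => ?_
  rw [ι_whiskerLeftCochain F B _ hpq h rfl (by lia),
    Cochain.comp_v _ _ hk i₂ (i₂ + n) (i₂ + k) rfl (by lia),
    Cochain.comp_v _ _ hk p (p + n) q rfl (by lia), ← Category.assoc,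
    ι_whiskerLeftCochain F B γ rfl h rfl (by lia), Linear.units_smul_comp, Category.assoc,
    ι_whiskerLeftCochain F B γ' (p := p + n) (q := q) (by lia) (by lia) (j₂ := i₂ + k) (by lia)
      (by lia), Linear.comp_units_smul, smul_smul, ← Int.negOnePow_add, ← add_mul, hk,
    Functor.map_comp, Category.assoc]

lemma whiskerLeftCochain_ofHom (f : K ⟶ L) : whiskerLeftCochain F B (Cochain.ofHom f) =
    Cochain.ofHom (mapBifunctorMap (𝟙 B) f F (ComplexShape.up ℤ)) := by
  ext p : 1
  refine mapBifunctor.hom_ext fun i₁ i₂ (h : i₁ + i₂ = p) => ?_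
  rw [ι_whiskerLeftCochain F B _ (add_zero p) h (add_zero _) h]
  simp

lemma ι_whiskerLeftCochain_comp_d {n : ℤ} (γ : Cochain K L n) {p q i₁ i₂ j₁ j₂ k₂ : ℤ}
    (hpq : p + n + 1 = q)
    (h : i₁ + i₂ = p) (h₁ : i₁ + 1 = j₁) (h₂ : i₂ + n = j₂) (h₂' : j₂ + 1 = k₂) :
    ιMapBifunctor B K F (ComplexShape.up ℤ) i₁ i₂ p h ≫
      (whiskerLeftCochain F B γ).v p (p + n) rfl ≫
        (mapBifunctor B L F (ComplexShape.up ℤ)).d (p + n) q =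
    (n * i₁).negOnePow • ((F.map (B.d i₁ j₁)).app (K.X i₂) ≫
      (F.obj (B.X j₁)).map (γ.v i₂ j₂ h₂) ≫
        ιMapBifunctor B L F (ComplexShape.up ℤ) j₁ j₂ q (by dsimp; lia)) +
    (n * i₁ + i₁).negOnePow • ((F.obj (B.X i₁)).map (γ.v i₂ j₂ h₂ ≫ L.d j₂ k₂) ≫
      ιMapBifunctor B L F (ComplexShape.up ℤ) i₁ k₂ q (by dsimp; lia)) := by
  rw [← Category.assoc, ι_whiskerLeftCochain F B γ rfl h h₂ (by lia), Linear.units_smul_comp,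
    Category.assoc, ι_mapBifunctor_up_d F B L h₁ h₂' (by lia) (by lia) (by lia)]
  simp only [Preadditive.comp_add, Linear.comp_units_smul, smul_add, smul_smul,
    NatTrans.naturality_assoc, Functor.map_comp, Category.assoc, Int.negOnePow_add]

lemma ι_d_comp_whiskerLeftCochain {n : ℤ} (γ : Cochain K L n) {p q i₁ i₂ j₁ j₂ k₂ l₂ : ℤ}
    (hpq : p + 1 + n = q)
    (h : i₁ + i₂ = p) (h₁ : i₁ + 1 = j₁) (h₂ : i₂ + 1 = j₂) (hk : i₂ + n = k₂)
    (hl : j₂ + n = l₂) :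
    ιMapBifunctor B K F (ComplexShape.up ℤ) i₁ i₂ p h ≫
      (mapBifunctor B K F (ComplexShape.up ℤ)).d p (p + 1) ≫
        (whiskerLeftCochain F B γ).v (p + 1) q hpq =
    (n * j₁).negOnePow • ((F.map (B.d i₁ j₁)).app (K.X i₂) ≫
      (F.obj (B.X j₁)).map (γ.v i₂ k₂ hk) ≫
        ιMapBifunctor B L F (ComplexShape.up ℤ) j₁ k₂ q (by dsimp; lia)) +
    (n * i₁ + i₁).negOnePow • ((F.obj (B.X i₁)).map (K.d i₂ j₂ ≫ γ.v j₂ l₂ hl) ≫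
      ιMapBifunctor B L F (ComplexShape.up ℤ) i₁ l₂ q (by dsimp; lia)) := by
  rw [← Category.assoc, ι_mapBifunctor_up_d F B K h₁ h₂ h (by lia) (by lia),
    Preadditive.add_comp, Linear.units_smul_comp, Category.assoc, Category.assoc,
    ι_whiskerLeftCochain F B γ hpq (by lia) hk (by lia),
    ι_whiskerLeftCochain F B γ hpq (by lia) hl (by lia)]
  simp only [Linear.comp_units_smul, smul_smul, Functor.map_comp, Category.assoc,
    Int.negOnePow_add, mul_comm]

lemma δ_whiskerLeftCochain {n m : ℤ} (hm : n + 1 = m) (γ : Cochain K L n) :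
    δ n m (whiskerLeftCochain F B γ) = whiskerLeftCochain F B (δ n m γ) := by
  ext p q hpq : 1
  refine mapBifunctor.hom_ext fun i₁ i₂ (h : i₁ + i₂ = p) => ?_
  rw [δ_v n m hm _ p q hpq (p + n) (p + 1) (by lia) rfl, Preadditive.comp_add,
    Linear.comp_units_smul,
    ι_whiskerLeftCochain_comp_d F B γ (by lia) h rfl rfl (k₂ := i₂ + m) (by lia),
    ι_d_comp_whiskerLeftCochain F B γ (by lia) h rfl rfl rfl (l₂ := i₂ + m) (by lia),
    ι_whiskerLeftCochain F B _ hpq h rfl (by lia),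
    δ_v n m hm γ i₂ (i₂ + m) rfl (i₂ + n) (i₂ + 1) (by lia) rfl]
  have sign_d : m.negOnePow * (n * (i₁ + 1)).negOnePow = -(n * i₁).negOnePow := by
    rw [← Int.negOnePow_add, ← Int.negOnePow_succ, Int.negOnePow_eq_iff]
    exact ⟨n, by subst hm; ring⟩
  have sign_comp : n * i₁ + i₁ = m * i₁ := by subst hm; ring
  simp only [Functor.map_add, Functor.map_units_smul, Preadditive.add_comp,
    Linear.units_smul_comp, smul_add, smul_smul, sign_d, sign_comp, Units.neg_smul,
    mul_comm m.negOnePow]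
  abel

/-- The isomorphism `Cone(id_B ⊗ φ) ≅ B ⊗ Cone(φ)`, where the tensor product of complexes is the
one given by the bifunctor `F`. -/
noncomputable def mappingConeMapBifunctorIso (φ : K ⟶ L) [HasHomotopyCofiber φ]
    [HasHomotopyCofiber (mapBifunctorMap (𝟙 B) φ F (ComplexShape.up ℤ))]
    [HasMapBifunctor B (mappingCone φ) F (ComplexShape.up ℤ)] :
    mappingCone (mapBifunctorMap (𝟙 B) φ F (ComplexShape.up ℤ)) ≅
      mapBifunctor B (mappingCone φ) F (ComplexShape.up ℤ) :=
  mappingConeIsoOfSplitting _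
    (whiskerLeftCochain F B (mappingCone.inl φ))
    (mapBifunctorMap (𝟙 B) (mappingCone.inr φ) F (ComplexShape.up ℤ))
    (whiskerLeftCochain F B (mappingCone.fst φ).1)
    (whiskerLeftCochain F B (mappingCone.snd φ))
    (by rw [δ_whiskerLeftCochain F B (by simp), mappingCone.δ_inl, Cochain.ofHom_comp,
      whiskerLeftCochain_comp, whiskerLeftCochain_ofHom, whiskerLeftCochain_ofHom,
      Cochain.ofHom_comp])
    (by rw [← whiskerLeftCochain_comp, mappingCone.inl_fst, whiskerLeftCochain_ofHom,
      mapBifunctorMap_id])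
    (by rw [← whiskerLeftCochain_comp, mappingCone.inl_snd, map_zero])
    (by rw [← whiskerLeftCochain_ofHom, ← whiskerLeftCochain_comp, mappingCone.inr_fst, map_zero])
    (by rw [← whiskerLeftCochain_ofHom, ← whiskerLeftCochain_comp, mappingCone.inr_snd,
      whiskerLeftCochain_ofHom, mapBifunctorMap_id])
    (by rw [← whiskerLeftCochain_ofHom, ← whiskerLeftCochain_comp, ← whiskerLeftCochain_comp,
      ← map_add, mappingCone.id, whiskerLeftCochain_ofHom, mapBifunctorMap_id])

end WhiskerLeftCochain

lemma homOrderGE.whiskerLeft {B : Cx R} {m : ℤ} (hB : ∀ i < m, IsZero (B.X i))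
    {K L : Cx R} {φ : K ⟶ L} {d : ℤ} (hφ : homOrderGE φ d) : homOrderGE (B ◁ φ) (m + d) := by
  obtain ⟨C, ⟨e⟩, hC⟩ := hφ
  let F := curriedTensor (ModuleCat R)
  have cone_equiv : HomotopyEquiv (CochainComplex.mappingCone (B ◁ φ)) (B ⊗ C) :=
    (HomotopyEquiv.ofIso (mappingConeMapBifunctorIso F B φ)).trans
      (mapBifunctorHomotopyEquiv₂ F B e (ComplexShape.up ℤ))
  exact ⟨B ⊗ C, ⟨cone_equiv⟩, fun _ hi => isZero_mapBifunctor_X_of_lt F hB hC hi⟩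

/-- Lemma 2.6 of [MWGI].  Tensoring with a bounded-below complex `B`
commutes with limits of inverse systems: if `A∞` (with structure maps `ft k`) is a limit
of the inverse system `{A_k, f_k}`, then `B ⊗ A∞`, with the maps `id_B ⊗ ft k`, is a
limit of the inverse system `{B ⊗ A_k, id_B ⊗ f_k}`. -/
theorem tensor_systemLimit (B : Cx R) (m : ℤ) (hB : ∀ i : ℤ, i < m → IsZero (B.X i))
    (A : ℕ → Cx R) (f : ∀ k : ℕ, A (k + 1) ⟶ A k)
    (Ainf : Cx R) (ft : ∀ k : ℕ, Ainf ⟶ A k)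
    (hAlim : IsSystemLimit A f Ainf ft) :
    IsSystemLimit (fun k : ℕ => B ⊗ A k) (fun k : ℕ => B ◁ f k)
      (B ⊗ Ainf) (fun k : ℕ => B ◁ ft k) := by
  obtain ⟨hcomp, hord⟩ := hAlim
  refine ⟨fun k => ?_, fun d => ?_⟩
  · dsimp only
    rw [← whiskerLeft_comp, hcomp]
  · obtain ⟨N, hN⟩ := hord (d - m)
    exact ⟨N, fun k hk => by simpa using (hN k hk).whiskerLeft hB⟩

end Monoidal
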